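/- arXiv:2405.15510 — 2 statements merged into one kernel-verified Lean document; each statement's English description precedes it below -/
import Mathlib

section
/- Let Λ = U ⊕ U ⊕ E₈ ⊕ E₈ ⊕ [−2] ⊕ [−2], where U is the hyperbolic plane, E₈ is the negative definite E₈ root lattice, and [−2] is the rank one lattice generated by a vector of square −2. Then the discriminant group D_Λ = Λ^∨/Λ is isomorphic to (ℤ/2ℤ)², the orthogonal group O(D_Λ) of the induced finite quadratic form on D_Λ has order 2, and consequently the stable subgroup Õ(Λ) = O⁺(Λ) ∩ O^#(Λ) has index 2 in O⁺(Λ). -/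
/-- Gram matrix of the negative definite `E₈` root lattice. -/
def E8M : Matrix (Fin 8) (Fin 8) ℤ :=
  !![-2, 0, 1, 0, 0, 0, 0, 0;
      0, -2, 0, 1, 0, 0, 0, 0;
      1, 0, -2, 1, 0, 0, 0, 0;
      0, 1, 1, -2, 1, 0, 0, 0;
      0, 0, 0, 1, -2, 1, 0, 0;
      0, 0, 0, 0, 1, -2, 1, 0;
      0, 0, 0, 0, 0, 1, -2, 1;
      0, 0, 0, 0, 0, 0, 1, -2]

/-- Index type for `Λ = U^{⊕2} ⊕ E₈^{⊕2} ⊕ [-2]^{⊕2}`, of rank 22. -/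
abbrev JΛ : Type := (Fin 2 × Fin 2) ⊕ ((Fin 2 × Fin 8) ⊕ Fin 2)

/-- Gram matrix of `Λ = U^{⊕2} ⊕ E₈^{⊕2} ⊕ [-2]^{⊕2}`. -/
def gΛ : JΛ → JΛ → ℤ
  | Sum.inl (a, i), Sum.inl (b, j) => if a = b ∧ i ≠ j then 1 else 0
  | Sum.inr (Sum.inl (a, i)), Sum.inr (Sum.inl (b, j)) => if a = b then E8M i j else 0
  | Sum.inr (Sum.inr a), Sum.inr (Sum.inr b) => if a = b then -2 else 0
  | _, _ => 0

/-- The bilinear form of `Λ` extended to `V = Λ ⊗ ℚ`. -/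
def bfQ (x y : JΛ → ℚ) : ℚ := ∑ i : JΛ, ∑ j : JΛ, x i * (gΛ i j : ℚ) * y j

/-- The lattice `Λ` inside `V`, as the integral points. -/
def LΛ : Submodule ℤ (JΛ → ℚ) :=
  LinearMap.range (LinearMap.pi fun i =>
    ((Int.castAddHom ℚ).toIntLinearMap.comp (LinearMap.proj i) :
      (JΛ → ℤ) →ₗ[ℤ] ℚ))

/-- The dual lattice `Λ^∨ ⊆ Λ ⊗ ℚ`. -/
def DualΛ : Submodule ℤ (JΛ → ℚ) where
  carrier := {x | ∀ l ∈ LΛ, ∃ n : ℤ, bfQ x l = (n : ℚ)}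
  add_mem' := by
    intro x y hx hy l hl
    obtain ⟨a, ha⟩ := hx l hl
    obtain ⟨b, hb⟩ := hy l hl
    refine ⟨a + b, ?_⟩
    have : bfQ (x + y) l = bfQ x l + bfQ y l := by
      simp [bfQ, Pi.add_apply, add_mul, Finset.sum_add_distrib]
    rw [this, ha, hb]; push_cast; ring
  zero_mem' := by
    intro l hl
    exact ⟨0, by simp [bfQ]⟩
  smul_mem' := by
    intro c x hx l hl
    obtain ⟨n, hn⟩ := hx l hl
    refine ⟨c * n, ?_⟩
    have : bfQ (c • x) l = (c : ℚ) * bfQ x l := by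
      simp [bfQ, Pi.smul_apply, zsmul_eq_mul, Finset.mul_sum, mul_add, mul_assoc]
    rw [this, hn]; push_cast; ring

/-- The discriminant group `D_Λ = Λ^∨/Λ`. -/
abbrev DiscΛ : Type := DualΛ ⧸ (Submodule.comap DualΛ.subtype LΛ)

/-- `f` belongs to `O(Λ)`. -/
def IsIsomΛ (f : (JΛ → ℚ) ≃ₗ[ℚ] (JΛ → ℚ)) : Prop :=
  (∀ x y, bfQ (f x) (f y) = bfQ x y) ∧ (∀ x ∈ LΛ, f x ∈ LΛ) ∧
    ∀ x ∈ LΛ, f.symm x ∈ LΛ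

/-- `f ∈ O⁺(Λ)`: real spinor norm 1, witnessed by a reflection decomposition
along non-isotropic vectors `v_i` with `∏ (-v_i²/2) > 0`. -/
def SpinPosΛ (f : (JΛ → ℚ) ≃ₗ[ℚ] (JΛ → ℚ)) : Prop :=
  ∃ vs : List (JΛ → ℚ), (∀ v ∈ vs, bfQ v v ≠ 0) ∧
    ((vs.map fun v x => x - (2 * bfQ x v / bfQ v v) • v).foldr (· ∘ ·) id = ⇑f) ∧
    0 < ((vs.map fun v => -(bfQ v v) / 2).prod)

/-- `f` is stable: it acts trivially on the discriminant group `D_Λ`. -/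
def StableΛ (f : (JΛ → ℚ) ≃ₗ[ℚ] (JΛ → ℚ)) : Prop :=
  ∀ x : JΛ → ℚ, x ∈ DualΛ → f x - x ∈ LΛ

/-!
If `L = M ⊕ ℤ r ⊕ ℤ s` with `M` even unimodular and `r² = s² = -2`, then `D_L` is the discriminant
group `(ℤ/2ℤ)²` of `[-2] ⊕ [-2]`, with form `(m, n) ↦ -(m² + n²) / 2 mod 2ℤ`. The classes of `r / 2`
and `s / 2` generate `D_L` and are the only ones of value `-1/2`, so that an isometry of `D_L` fixes
both or swaps them. In a group of order two the product of two nontrivial elements is trivial, which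
bounds the index of `Õ(L)` by two; the reflection in `r - s`, a vector of square `-4`, lies in
`O⁺(L)` and swaps `r / 2` and `s / 2`.
-/

open LinearMap (BilinForm)

section Lattice

variable {V : Type*} [AddCommGroup V] [Module ℚ V] (B : BilinForm ℚ V) (L : Submodule ℤ V)

/-- The discriminant group `D_L = L^∨ / L` of a lattice `L` in a rational quadratic space. -/
abbrev DiscriminantGroup : Type _ :=
  B.dualSubmodule L ⧸ L.comap (B.dualSubmodule L).subtype

/-- The lattice `L` is even: `l² ∈ 2ℤ` for all `l ∈ L`. -/
def IsEvenLattice : Prop :=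
  ∀ l ∈ L, ∃ k : ℤ, B l l = 2 * (k : ℚ)

/-- The orthogonal group `O(L)`, as a predicate on the rational automorphisms. -/
def IsLatticeIsometry (f : V ≃ₗ[ℚ] V) : Prop :=
  (∀ x y, B (f x) (f y) = B x y) ∧ (∀ x ∈ L, f x ∈ L) ∧ ∀ x ∈ L, f.symm x ∈ L

/-- Real spinor norm `1`, with the sign convention in which reflections in negative vectors have
positive spinor norm. -/
def HasPositiveSpinorNorm (f : V ≃ₗ[ℚ] V) : Prop :=
  ∃ vs : List V, (∀ v ∈ vs, B v v ≠ 0) ∧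
    ((vs.map fun v x => x - (2 * B x v / B v v) • v).foldr (· ∘ ·) id = ⇑f) ∧
    0 < (vs.map fun v => -(B v v) / 2).prod

/-- Membership in the stable orthogonal group `O^#(L)`: `f` acts trivially on `L^∨ / L`. -/
def IsStable (f : V ≃ₗ[ℚ] V) : Prop :=
  ∀ x ∈ B.dualSubmodule L, f x - x ∈ L

/-- The orthogonal group `O(D_L)` of the discriminant form `x + L ↦ x² mod 2ℤ`. The form itself is
not formed on the quotient: values are compared on arbitrary representatives. -/
def IsDiscriminantIsometry (φ : DiscriminantGroup B L ≃+ DiscriminantGroup B L) : Prop :=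
  ∀ x y : B.dualSubmodule L, φ (Submodule.Quotient.mk x) = Submodule.Quotient.mk y →
    ∃ k : ℤ, B y y - B x x = 2 * (k : ℚ)

variable {B L} {f g : V ≃ₗ[ℚ] V}

theorem exists_intCast_eq_of_mem_dualSubmodule {x l : V} (hx : x ∈ B.dualSubmodule L)
    (hl : l ∈ L) : ∃ n : ℤ, B x l = n := by
  obtain ⟨n, hn⟩ := Submodule.mem_one.1 (hx l hl)
  exact ⟨n, by simpa using hn.symm⟩

theorem DiscriminantGroup.mk_eq_mk_iff {x y : B.dualSubmodule L} :
    (Submodule.Quotient.mk x : DiscriminantGroup B L) = Submodule.Quotient.mk y ↔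
      (x : V) - y ∈ L :=
  Submodule.Quotient.eq _

theorem IsEvenLattice.exists_sub_eq_two_mul (hL : IsEvenLattice B L) (hB : B.IsSymm) {x y : V}
    (hx : x ∈ B.dualSubmodule L) (hxy : y - x ∈ L) :
    ∃ k : ℤ, B y y - B x x = 2 * (k : ℚ) := by
  obtain ⟨m, hm⟩ := exists_intCast_eq_of_mem_dualSubmodule hx hxy
  obtain ⟨n, hn⟩ := hL _ hxy
  have expand : B y y - B x x = 2 * B x (y - x) + B (y - x) (y - x) := by
    simp only [map_sub, LinearMap.sub_apply, hB.eq y x]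
    ring
  exact ⟨m + n, by rw [expand, hm, hn]; push_cast; ring⟩

namespace IsLatticeIsometry

theorem symm (hf : IsLatticeIsometry B L f) : IsLatticeIsometry B L f.symm :=
  ⟨fun x y => by rw [← hf.1, f.apply_symm_apply, f.apply_symm_apply], hf.2.2, hf.2.1⟩

theorem trans (hf : IsLatticeIsometry B L f) (hg : IsLatticeIsometry B L g) :
    IsLatticeIsometry B L (f.trans g) :=
  ⟨fun x y => (hg.1 _ _).trans (hf.1 x y), fun x hx => hg.2.1 _ (hf.2.1 x hx),
    fun x hx => hf.2.2 _ (hg.2.2 x hx)⟩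

theorem map_mem_dualSubmodule (hf : IsLatticeIsometry B L f) {x : V}
    (hx : x ∈ B.dualSubmodule L) : f x ∈ B.dualSubmodule L := fun l hl => by
  rw [← f.apply_symm_apply l, hf.1]
  exact hx _ (hf.2.2 l hl)

theorem symm_apply_mem_iff (hf : IsLatticeIsometry B L f) {x : V} : f.symm x ∈ L ↔ x ∈ L :=
  ⟨fun hx => by simpa only [f.apply_symm_apply] using hf.2.1 _ hx, hf.2.2 x⟩

/-- The automorphism of the dual lattice induced by an isometry. -/
def dualEquiv (hf : IsLatticeIsometry B L f) : B.dualSubmodule L ≃ₗ[ℤ] B.dualSubmodule L :=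
  { (f.toLinearMap.restrictScalars ℤ).restrict fun _ => hf.map_mem_dualSubmodule with
    invFun := fun x => ⟨f.symm x, hf.symm.map_mem_dualSubmodule x.2⟩
    left_inv := fun x => Subtype.ext (f.symm_apply_apply x)
    right_inv := fun x => Subtype.ext (f.apply_symm_apply x) }

/-- The automorphism of the discriminant group induced by an isometry, i.e. the image of `f` under
`O(L) → O(D_L)`. -/
def discriminantEquiv (hf : IsLatticeIsometry B L f) :
    DiscriminantGroup B L ≃+ DiscriminantGroup B L :=
  (Submodule.Quotient.equiv _ _ hf.dualEquiv <| by
    ext x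
    rw [Submodule.mem_map_equiv]
    exact hf.symm_apply_mem_iff).toAddEquiv

theorem discriminantEquiv_mk (hf : IsLatticeIsometry B L f) (x : B.dualSubmodule L) :
    hf.discriminantEquiv (Submodule.Quotient.mk x) =
      Submodule.Quotient.mk ⟨f x, hf.map_mem_dualSubmodule x.2⟩ := rfl

theorem isStable_iff (hf : IsLatticeIsometry B L f) :
    IsStable B L f ↔ hf.discriminantEquiv = AddEquiv.refl _ := by
  simp only [AddEquiv.ext_iff, (Submodule.Quotient.mk_surjective _).forall, discriminantEquiv_mk,
    AddEquiv.refl_apply, DiscriminantGroup.mk_eq_mk_iff, Subtype.forall, IsStable]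

theorem isDiscriminantIsometry (hf : IsLatticeIsometry B L f) (hB : B.IsSymm)
    (hL : IsEvenLattice B L) : IsDiscriminantIsometry B L hf.discriminantEquiv := by
  intro x y hxy
  rw [← hf.1 x x]
  refine hL.exists_sub_eq_two_mul hB (hf.map_mem_dualSubmodule x.2) ?_
  exact DiscriminantGroup.mk_eq_mk_iff.1 hxy.symm

theorem isStable_trans_of_card_eq_two (hf : IsLatticeIsometry B L f)
    (hg : IsLatticeIsometry B L g) (hB : B.IsSymm) (hL : IsEvenLattice B L)
    (hcard : Nat.card {φ // IsDiscriminantIsometry B L φ} = 2)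
    (hfs : ¬IsStable B L f) (hgs : ¬IsStable B L g) : IsStable B L (f.trans g) := by
  have refl_mem : IsDiscriminantIsometry B L (AddEquiv.refl _) := fun x y hxy =>
    hL.exists_sub_eq_two_mul hB x.2 (DiscriminantGroup.mk_eq_mk_iff.1 hxy.symm)
  obtain ⟨σ, -, hσ⟩ := (Nat.card_eq_two_iff' ⟨_, refl_mem⟩).1 hcard
  have eq_σ {h} (hh : IsLatticeIsometry B L h) (hs : ¬IsStable B L h) :
      hh.discriminantEquiv = σ :=
    congrArg Subtype.val <| hσ ⟨_, hh.isDiscriminantIsometry hB hL⟩ fun h_eq =>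
      hs (hh.isStable_iff.2 (congrArg Subtype.val h_eq))
  by_contra hfgs
  have hσσ : σ.1.trans σ.1 = σ.1 := calc
    σ.1.trans σ.1 = hf.discriminantEquiv.trans hg.discriminantEquiv := by
      rw [eq_σ hf hfs, eq_σ hg hgs]
    _ = (hf.trans hg).discriminantEquiv := by
      ext d
      obtain ⟨x, rfl⟩ := Submodule.Quotient.mk_surjective _ d
      rfl
    _ = σ := eq_σ _ hfgs
  refine hfs (hf.isStable_iff.2 ?_)
  rw [eq_σ hf hfs]
  ext d
  exact σ.1.injective (DFunLike.congr_fun hσσ d)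

end IsLatticeIsometry
end Lattice

section KleinFour

/-- The function on `(ℤ/2ℤ)²` sending `(m, n)` to `m² + n² mod 4`. It is `-2` times the discriminant
form of `[-2] ⊕ [-2]`, which takes the value `-(m² + n²)/2 mod 2ℤ` at `(m, n)`. -/
def sumSq (z : ZMod 2 × ZMod 2) : ZMod 4 := z.1.val + z.2.val

theorem sumSq_intCast (m n : ℤ) : sumSq (m, n) = ((m ^ 2 + n ^ 2 : ℤ) : ZMod 4) := by
  have val_eq_sq (a : ℤ) : ((a : ZMod 2).val : ZMod 4) = (a : ZMod 4) ^ 2 := by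
    have h : ∀ c : ZMod 4, ((c.cast : ZMod 2).val : ZMod 4) = c ^ 2 := by decide
    rw [← h, ZMod.cast_intCast (by norm_num)]
  simp only [sumSq, val_eq_sq]
  push_cast
  rfl

theorem sumSq_swap (z : ZMod 2 × ZMod 2) : sumSq z.swap = sumSq z := add_comm _ _

theorem eq_refl_or_eq_prodComm_of_sumSq {g : ZMod 2 × ZMod 2 ≃+ ZMod 2 × ZMod 2}
    (hg : ∀ z, sumSq (g z) = sumSq z) : g = AddEquiv.refl _ ∨ g = AddEquiv.prodComm := by
  have eq_of_sumSq_eq_one : ∀ z, sumSq z = 1 → z = (1, 0) ∨ z = (0, 1) := by decide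
  have eq_of_basis {h : ZMod 2 × ZMod 2 ≃+ ZMod 2 × ZMod 2} (h₁ : g (1, 0) = h (1, 0))
      (h₂ : g (0, 1) = h (0, 1)) : g = h := by
    have eq_sum_basis : ∀ z : ZMod 2 × ZMod 2,
      z = 0 ∨ z = (1, 0) ∨ z = (0, 1) ∨ z = (1, 0) + (0, 1) := by decide
    ext1 z
    rcases eq_sum_basis z with rfl | rfl | rfl | rfl <;> simp only [map_zero, map_add, h₁, h₂]
  have ne : g (1, 0) ≠ g (0, 1) := g.injective.ne (by decide)
  rcases eq_of_sumSq_eq_one _ (hg (1, 0)) with h₁ | h₁ <;>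
    rcases eq_of_sumSq_eq_one _ (hg (0, 1)) with h₂ | h₂
  · exact absurd (h₁.trans h₂.symm) ne
  · exact .inl (eq_of_basis h₁ h₂)
  · exact .inr (eq_of_basis h₁ h₂)
  · exact absurd (h₁.trans h₂.symm) ne

theorem card_addEquiv_preserving_sumSq :
    Nat.card {g : ZMod 2 × ZMod 2 ≃+ ZMod 2 × ZMod 2 // ∀ z, sumSq (g z) = sumSq z} = 2 := by
  refine Nat.card_eq_two_iff.2
    ⟨⟨AddEquiv.refl _, fun _ => rfl⟩, ⟨AddEquiv.prodComm, sumSq_swap⟩, fun h => ?_, ?_⟩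
  · exact absurd (DFunLike.congr_fun (congrArg Subtype.val h) (1, 0)) (by decide)
  · exact Set.eq_univ_of_forall fun ⟨g, hg⟩ =>
      (eq_refl_or_eq_prodComm_of_sumSq hg).imp Subtype.ext Subtype.ext

end KleinFour

section Reflection

variable {V : Type*} [AddCommGroup V] [Module ℚ V] {B : BilinForm ℚ V} {L : Submodule ℤ V} {v : V}

theorem isReflective_of_ne_zero (hv : B v v ≠ 0) : B.IsReflective v :=
  ⟨.of_ne_zero hv, fun _ => hv.isUnit.dvd⟩

/-- The reflection of a rational quadratic space in a non-isotropic vector. -/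
noncomputable def reflectionIn (hv : B v v ≠ 0) : V ≃ₗ[ℚ] V :=
  Module.reflection (isReflective_of_ne_zero hv).coroot_apply_self

theorem reflectionIn_apply (hB : B.IsSymm) (hv : B v v ≠ 0) (x : V) :
    reflectionIn hv x = x - (2 * B x v / B v v) • v := by
  rw [reflectionIn, Module.reflection_apply, hB.eq x v,
    ← (isReflective_of_ne_zero hv).apply_self_mul_coroot_apply, mul_div_cancel_left₀ _ hv]

theorem hasPositiveSpinorNorm_reflectionIn (hB : B.IsSymm) (hv : B v v < 0) :
    HasPositiveSpinorNorm B (reflectionIn hv.ne) := by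
  refine ⟨[v], by simpa using hv.ne, ?_, by simpa using hv⟩
  ext x
  simp [reflectionIn_apply hB]

theorem isLatticeIsometry_reflectionIn (hB : B.IsSymm) (hv : B v v ≠ 0) (hvL : v ∈ L)
    (h : ∀ l ∈ L, ∃ n : ℤ, 2 * B l v / B v v = n) : IsLatticeIsometry B L (reflectionIn hv) := by
  have map_mem (l : V) (hl : l ∈ L) : reflectionIn hv l ∈ L := by
    obtain ⟨n, hn⟩ := h l hl
    rw [reflectionIn_apply hB, hn, Int.cast_smul_eq_zsmul]
    exact L.sub_mem hl (L.smul_mem n hvL)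
  exact ⟨(isReflective_of_ne_zero hv).isOrthogonal_reflection B ⟨hB.eq⟩, map_mem, map_mem⟩

end Reflection

/-- `L = M ⊕ ℤ r ⊕ ℤ s` is an orthogonal decomposition with `M` even unimodular and
`r² = s² = -2`. The summand `M` is not mentioned: that `ℤ r` and `ℤ s` split off says that `r / 2`
and `s / 2` lie in `L^∨`, and `M` is unimodular when the orthogonal projection along `r` and `s`
maps `L^∨` into `L`. -/
structure SplitsRootPair {V : Type*} [AddCommGroup V] [Module ℚ V] (B : BilinForm ℚ V)
    (L : Submodule ℤ V) (r s : L) : Prop where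
  isSymm : B.IsSymm
  isEven : IsEvenLattice B L
  left_self : B r r = -2
  right_self : B s s = -2
  left_right : B r s = 0
  half_left_mem : (2⁻¹ : ℚ) • (r : V) ∈ B.dualSubmodule L
  half_right_mem : (2⁻¹ : ℚ) • (s : V) ∈ B.dualSubmodule L
  projection_mem : ∀ x ∈ B.dualSubmodule L, x + (B x r / 2) • (r : V) + (B x s / 2) • (s : V) ∈ L

section RootPair

variable {V : Type*} [AddCommGroup V] [Module ℚ V] {B : BilinForm ℚ V} {L : Submodule ℤ V}

/-- The pairing `L^∨ → ℤ/2ℤ`, `x ↦ B x r mod 2`, with a lattice vector `r`. -/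
noncomputable def modTwoPairing (B : BilinForm ℚ V) (r : L) : B.dualSubmodule L →ₗ[ℤ] ZMod 2 :=
  Algebra.linearMap ℤ (ZMod 2) ∘ₗ (B.dualSubmoduleToDual L).flip r

theorem modTwoPairing_eq_intCast {r : L} {x : B.dualSubmodule L} {n : ℤ} (h : B x r = n) :
    modTwoPairing B r x = n := by
  have : B.dualSubmoduleParing x r = n := by
    have spec := B.dualSubmoduleParing_spec x r
    rw [h, eq_intCast] at spec
    exact_mod_cast spec
  simp [modTwoPairing, this]

theorem modTwoPairing_eq_zero_iff {r : L} {x : B.dualSubmodule L} :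
    modTwoPairing B r x = 0 ↔ ∃ k : ℤ, B x r = 2 * (k : ℚ) := by
  obtain ⟨n, hn⟩ := exists_intCast_eq_of_mem_dualSubmodule x.2 r.2
  rw [modTwoPairing_eq_intCast hn, hn, ZMod.intCast_zmod_eq_zero_iff_dvd]
  exact exists_congr fun k => by norm_cast

namespace SplitsRootPair

variable {r s : L} (h : SplitsRootPair B L r s)
include h

theorem right_left : B s r = 0 := (h.isSymm.eq r s).symm.trans h.left_right

theorem exists_apply_left_eq_two_mul {l : V} (hl : l ∈ L) : ∃ k : ℤ, B l r = 2 * (k : ℚ) := by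
  obtain ⟨k, hk⟩ := exists_intCast_eq_of_mem_dualSubmodule h.half_left_mem hl
  refine ⟨k, ?_⟩
  rw [← hk, h.isSymm.eq]
  simp

theorem swap : SplitsRootPair B L s r where
  isSymm := h.isSymm
  isEven := h.isEven
  left_self := h.right_self
  right_self := h.left_self
  left_right := h.right_left
  half_left_mem := h.half_right_mem
  half_right_mem := h.half_left_mem
  projection_mem x hx := by simpa only [add_right_comm] using h.projection_mem x hx

theorem exists_self_eq {x : V} (hx : x ∈ B.dualSubmodule L) :
    ∃ k : ℤ, B x x = 2 * (k : ℚ) - (B x r ^ 2 + B x s ^ 2) / 2 := by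
  obtain ⟨k, hk⟩ := h.isEven _ (h.projection_mem x hx)
  refine ⟨k, ?_⟩
  rw [← hk]
  simp only [map_add, map_smul, LinearMap.add_apply, LinearMap.smul_apply, smul_eq_mul,
    h.left_self, h.right_self, h.left_right, h.right_left, h.isSymm.eq r x, h.isSymm.eq s x]
  ring

theorem ker_prod_modTwoPairing :
    LinearMap.ker ((modTwoPairing B r).prod (modTwoPairing B s)) =
      L.comap (B.dualSubmodule L).subtype := by
  ext x
  simp only [LinearMap.mem_ker, LinearMap.prod_apply, Function.prod, Prod.mk_eq_zero,
    modTwoPairing_eq_zero_iff, Submodule.mem_comap, Submodule.subtype_apply]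
  refine ⟨fun ⟨⟨a, ha⟩, ⟨b, hb⟩⟩ => ?_, fun hx =>
    ⟨h.exists_apply_left_eq_two_mul hx, h.swap.exists_apply_left_eq_two_mul hx⟩⟩
  have decomp : (x : V) = x + (B x r / 2) • (r : V) + (B x s / 2) • (s : V) - a • (r : V)
      - b • (s : V) := by
    rw [ha, hb]
    module
  rw [decomp]
  exact L.sub_mem (L.sub_mem (h.projection_mem x x.2) (L.smul_mem a r.2)) (L.smul_mem b s.2)

theorem modTwoPairing_left_half_left : modTwoPairing B r ⟨_, h.half_left_mem⟩ = 1 :=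
  modTwoPairing_eq_intCast (n := -1) (by simp [h.left_self])

theorem modTwoPairing_left_half_right : modTwoPairing B r ⟨_, h.half_right_mem⟩ = 0 :=
  modTwoPairing_eq_zero_iff.2 ⟨0, by simp [h.right_left]⟩

theorem prod_modTwoPairing_surjective :
    Function.Surjective ((modTwoPairing B r).prod (modTwoPairing B s)) := by
  rintro ⟨p, q⟩
  refine ⟨p.val • ⟨_, h.half_left_mem⟩ + q.val • ⟨_, h.half_right_mem⟩, ?_⟩
  simp only [map_add, map_nsmul, LinearMap.prod_apply, Function.prod,
    h.modTwoPairing_left_half_left, h.modTwoPairing_left_half_right,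
    h.swap.modTwoPairing_left_half_left, h.swap.modTwoPairing_left_half_right]
  simp

/-- The isomorphism `D_L ≃ (ℤ/2ℤ)²` given by pairing with `r` and `s` modulo `2`. -/
noncomputable def discriminantGroupEquiv : DiscriminantGroup B L ≃+ ZMod 2 × ZMod 2 :=
  ((Submodule.quotEquivOfEq _ _ h.ker_prod_modTwoPairing.symm).trans
    (LinearMap.quotKerEquivOfSurjective _ h.prod_modTwoPairing_surjective)).toAddEquiv

theorem discriminantGroupEquiv_mk (x : B.dualSubmodule L) :
    h.discriminantGroupEquiv (Submodule.Quotient.mk x) =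
      (modTwoPairing B r x, modTwoPairing B s x) := rfl

theorem exists_sub_eq_two_mul_iff (x y : B.dualSubmodule L) :
    (∃ k : ℤ, B y y - B x x = 2 * (k : ℚ)) ↔
      sumSq (h.discriminantGroupEquiv (Submodule.Quotient.mk y)) =
        sumSq (h.discriminantGroupEquiv (Submodule.Quotient.mk x)) := by
  have self_eq (z : B.dualSubmodule L) : ∃ m k : ℤ, B z z = 2 * (k : ℚ) - m / 2 ∧
      sumSq (h.discriminantGroupEquiv (Submodule.Quotient.mk z)) = m := by
    obtain ⟨k, hk⟩ := h.exists_self_eq z.2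
    obtain ⟨a, ha⟩ := exists_intCast_eq_of_mem_dualSubmodule z.2 r.2
    obtain ⟨b, hb⟩ := exists_intCast_eq_of_mem_dualSubmodule z.2 s.2
    refine ⟨a ^ 2 + b ^ 2, k, by rw [hk, ha, hb]; push_cast; rfl, ?_⟩
    rw [discriminantGroupEquiv_mk, modTwoPairing_eq_intCast ha, modTwoPairing_eq_intCast hb,
      sumSq_intCast]
  obtain ⟨m, i, hx, hxm⟩ := self_eq x
  obtain ⟨n, j, hy, hyn⟩ := self_eq y
  rw [hxm, hyn, hx, hy, ZMod.intCast_eq_intCast_iff_dvd_sub]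
  constructor
  · rintro ⟨k, hk⟩
    refine ⟨k - j + i, ?_⟩
    have : (m - n : ℚ) = 4 * (k - j + i) := by linarith
    exact_mod_cast this
  · rintro ⟨k, hk⟩
    refine ⟨k + j - i, ?_⟩
    have : (m - n : ℚ) = 4 * k := by exact_mod_cast hk
    push_cast
    linarith

theorem isDiscriminantIsometry_iff (φ : DiscriminantGroup B L ≃+ DiscriminantGroup B L) :
    IsDiscriminantIsometry B L φ ↔
      ∀ d, sumSq (h.discriminantGroupEquiv (φ d)) = sumSq (h.discriminantGroupEquiv d) := by
  simp only [IsDiscriminantIsometry, h.exists_sub_eq_two_mul_iff]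
  refine ⟨fun hφ d => ?_, fun hφ x y hxy => hxy ▸ hφ _⟩
  obtain ⟨x, rfl⟩ := Submodule.Quotient.mk_surjective _ d
  obtain ⟨y, hy⟩ := Submodule.Quotient.mk_surjective _ (φ (Submodule.Quotient.mk x))
  rw [← hy]
  exact hφ x y hy.symm

theorem card_isDiscriminantIsometry : Nat.card {φ // IsDiscriminantIsometry B L φ} = 2 := by
  rw [← card_addEquiv_preserving_sumSq]
  refine Nat.card_congr ((AddAut.congr h.discriminantGroupEquiv).toEquiv.subtypeEquiv fun φ => ?_)
  rw [h.isDiscriminantIsometry_iff, h.discriminantGroupEquiv.surjective.forall]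
  simp [AddAut.congr]

theorem sub_self_eq : B (r - s : V) (r - s) = -4 := by
  simp only [map_sub, LinearMap.sub_apply, h.left_self, h.right_self, h.left_right, h.right_left]
  norm_num

theorem reflectionIn_half_left (hv : B (r - s : V) (r - s) ≠ 0) :
    reflectionIn hv ((2⁻¹ : ℚ) • (r : V)) = (2⁻¹ : ℚ) • (s : V) := by
  rw [reflectionIn_apply h.isSymm, h.sub_self_eq]
  simp only [map_sub, map_smul, LinearMap.smul_apply, smul_eq_mul, h.left_self, h.left_right]
  module

theorem exists_isLatticeIsometry_not_isStable :
    ∃ f, IsLatticeIsometry B L f ∧ HasPositiveSpinorNorm B f ∧ ¬IsStable B L f := by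
  have hneg : B (r - s : V) (r - s) < 0 := by rw [h.sub_self_eq]; norm_num
  refine ⟨reflectionIn hneg.ne, ?_, hasPositiveSpinorNorm_reflectionIn h.isSymm hneg, ?_⟩
  · refine isLatticeIsometry_reflectionIn h.isSymm _ (L.sub_mem r.2 s.2) fun l hl => ?_
    obtain ⟨a, ha⟩ := h.exists_apply_left_eq_two_mul hl
    obtain ⟨b, hb⟩ := h.swap.exists_apply_left_eq_two_mul hl
    refine ⟨b - a, ?_⟩
    rw [h.sub_self_eq, map_sub, ha, hb]
    push_cast
    ring
  · intro hs
    have hmem := hs _ h.half_left_mem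
    rw [h.reflectionIn_half_left] at hmem
    obtain ⟨k, hk⟩ := h.exists_apply_left_eq_two_mul hmem
    have apply_left : B ((2⁻¹ : ℚ) • (s : V) - (2⁻¹ : ℚ) • (r : V)) r = 1 := by
      simp [h.left_self, h.right_left]
    rw [apply_left] at hk
    have : (1 : ℤ) = 2 * k := by exact_mod_cast hk
    lia

end SplitsRootPair

theorem stmt_4_general {r s : L} (h : SplitsRootPair B L r s) :
    Nonempty (DiscriminantGroup B L ≃+ ZMod 2 × ZMod 2) ∧
    Nat.card {φ // IsDiscriminantIsometry B L φ} = 2 ∧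
    (∃ f, IsLatticeIsometry B L f ∧ HasPositiveSpinorNorm B f ∧ ¬IsStable B L f) ∧
    ∀ f g, IsLatticeIsometry B L f → IsLatticeIsometry B L g →
      ¬IsStable B L f → ¬IsStable B L g → IsStable B L (f.trans g) :=
  ⟨⟨h.discriminantGroupEquiv⟩, h.card_isDiscriminantIsometry,
    h.exists_isLatticeIsometry_not_isStable,
    fun _ _ hf hg => hf.isStable_trans_of_card_eq_two hg h.isSymm h.isEven
      h.card_isDiscriminantIsometry⟩

end RootPair

section GramMatrix

open Matrix

variable {J : Type*}

variable (J) in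
/-- The standard lattice `ℤ^J` in `ℚ^J`. -/
def integerPoints : Submodule ℤ (J → ℚ) :=
  LinearMap.range ((Algebra.linearMap ℤ ℚ).compLeft J)

theorem mem_integerPoints_iff {x : J → ℚ} :
    x ∈ integerPoints J ↔ ∃ y : J → ℤ, Int.castRingHom ℚ ∘ y = x := Iff.rfl

theorem mem_integerPoints_iff_forall {x : J → ℚ} :
    x ∈ integerPoints J ↔ ∀ j, ∃ n : ℤ, x j = n := by
  simp only [mem_integerPoints_iff, funext_iff, Classical.skolem, eq_comm (a := x _)]
  rfl

theorem intCast_single_apply [DecidableEq J] (j : J) (a : ℤ) (k : J) :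
    ((Pi.single j a : J → ℤ) k : ℚ) = (Pi.single j (a : ℚ) : J → ℚ) k :=
  Pi.apply_single (fun _ => (Int.cast : ℤ → ℚ)) (fun _ => Int.cast_zero) j a k

theorem single_mem_integerPoints [DecidableEq J] (j : J) : Pi.single j 1 ∈ integerPoints J :=
  mem_integerPoints_iff.2 ⟨Pi.single j 1, funext fun k =>
    (intCast_single_apply j 1 k).trans (by rw [Int.cast_one])⟩

theorem row_map_intCast_eq_single [DecidableEq J] {G : Matrix J J ℤ} {i : J} {a : ℤ}
    (hi : G.row i = Pi.single i a) :
    (G.map (Int.cast : ℤ → ℚ)).row i = Pi.single i (a : ℚ) :=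
  funext fun k => (congrArg Int.cast (congrFun hi k)).trans (intCast_single_apply i a k)

variable [Fintype J]

theorem even_dotProduct_mulVec_self_of_isSymm {G : Matrix J J ℤ} (hG : G.IsSymm)
    (hdiag : ∀ i, Even (G i i)) (y : J → ℤ) : Even (y ⬝ᵥ G *ᵥ y) := by
  rw [← ZMod.intCast_eq_zero_iff_even]
  simp only [dotProduct, mulVec, Finset.mul_sum, ← Finset.sum_product', Int.cast_sum]
  -- The terms at `(i, j)` and `(j, i)` cancel modulo `2`.
  refine Finset.sum_involution (fun p _ => p.swap) (fun ⟨i, j⟩ _ => ?_) (fun ⟨i, j⟩ _ h => ?_)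
    (fun _ _ => Finset.mem_univ _) (fun _ _ => Prod.swap_swap _)
  · have : y j * (G j i * y i) = y i * (G i j * y j) := by rw [hG.apply i j]; ring
    simpa only [Prod.fst_swap, Prod.snd_swap, this] using CharTwo.add_self_eq_zero _
  · intro h_swap
    obtain rfl : j = i := congrArg Prod.fst h_swap
    exact h ((ZMod.intCast_eq_zero_iff_even).2 (((hdiag j).mul_right _).mul_left _))

theorem vecMul_mem_integerPoints {x : J → ℚ} (hx : x ∈ integerPoints J) (H : Matrix J J ℤ) :
    x ᵥ* H.map (↑) ∈ integerPoints J := by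
  obtain ⟨y, rfl⟩ := mem_integerPoints_iff.1 hx
  exact ⟨y ᵥ* H, funext ((Int.castRingHom ℚ).map_vecMul H y)⟩

variable [DecidableEq J]

/-- The bilinear form on `ℚ^J` with an integral Gram matrix. -/
noncomputable def gramForm (G : Matrix J J ℤ) : BilinForm ℚ (J → ℚ) :=
  Matrix.toBilin' (G.map (↑))

variable {G : Matrix J J ℤ}

theorem gramForm_apply (x y : J → ℚ) : gramForm G x y = (x ᵥ* G.map (↑)) ⬝ᵥ y := by
  rw [gramForm, toBilin'_apply', dotProduct_mulVec]

theorem gramForm_isSymm (hG : G.IsSymm) : (gramForm G).IsSymm :=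
  Matrix.isSymm_toBilin'_iff_isSymm.2 (hG.map _)

theorem gramForm_apply_single (x : J → ℚ) (j : J) :
    gramForm G x (Pi.single j 1) = (x ᵥ* G.map (↑)) j := by
  rw [gramForm_apply, dotProduct_single_one]

theorem isEvenLattice_gramForm (hG : G.IsSymm) (hdiag : ∀ i, Even (G i i)) :
    IsEvenLattice (gramForm G) (integerPoints J) := by
  intro x hx
  obtain ⟨y, rfl⟩ := mem_integerPoints_iff.1 hx
  obtain ⟨k, hk⟩ := even_iff_two_dvd.1 (even_dotProduct_mulVec_self_of_isSymm hG hdiag y)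
  refine ⟨k, ?_⟩
  calc gramForm G (Int.castRingHom ℚ ∘ y) (Int.castRingHom ℚ ∘ y)
      = ((y ⬝ᵥ G *ᵥ y : ℤ) : ℚ) := by
        rw [dotProduct_mulVec, ← eq_intCast (Int.castRingHom ℚ), RingHom.map_dotProduct,
          gramForm_apply]
        congr 1
        exact (funext ((Int.castRingHom ℚ).map_vecMul G y)).symm
    _ = 2 * (k : ℚ) := by rw [hk]; push_cast; rfl

theorem mem_dualSubmodule_gramForm_iff {x : J → ℚ} :
    x ∈ (gramForm G).dualSubmodule (integerPoints J) ↔ x ᵥ* G.map (↑) ∈ integerPoints J := by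
  constructor
  · refine fun hx => mem_integerPoints_iff_forall.2 fun j => ?_
    rw [← gramForm_apply_single]
    exact exists_intCast_eq_of_mem_dualSubmodule hx (single_mem_integerPoints j)
  · rintro ⟨z, hz⟩ _ ⟨y, rfl⟩
    refine Submodule.mem_one.2 ⟨z ⬝ᵥ y, ?_⟩
    rw [gramForm_apply, ← hz]
    exact RingHom.map_dotProduct _ _ _

theorem gramForm_single_apply {i : J} {a : ℤ} (hi : G.row i = Pi.single i a) (x : J → ℚ) :
    gramForm G (Pi.single i 1) x = a * x i := by
  rw [gramForm_apply, single_one_vecMul, row_map_intCast_eq_single hi, single_dotProduct]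

theorem half_single_mem_dualSubmodule_gramForm {i : J} (hi : G.row i = Pi.single i (-2)) :
    (2⁻¹ : ℚ) • (Pi.single i 1 : J → ℚ) ∈ (gramForm G).dualSubmodule (integerPoints J) := by
  have vecMul_eq : ((2⁻¹ : ℚ) • Pi.single i 1) ᵥ* G.map (↑) = (-Pi.single i 1 : J → ℚ) := by
    rw [smul_vecMul, single_one_vecMul, row_map_intCast_eq_single hi, ← Pi.single_smul,
      ← Pi.single_neg]
    norm_num
  rw [mem_dualSubmodule_gramForm_iff, vecMul_eq]
  exact neg_mem (single_mem_integerPoints i)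

theorem exists_intCast_eq_apply_of_col_mul_eq_single {H : Matrix J J ℤ} {k : J}
    (hk : (G * H).col k = Pi.single k 1) {x : J → ℚ}
    (hx : x ∈ (gramForm G).dualSubmodule (integerPoints J)) : ∃ n : ℤ, x k = n := by
  have row_eq : ((G * H)ᵀ.map (Int.cast : ℤ → ℚ)).row k = Pi.single k 1 := by
    simpa only [Int.cast_one] using row_map_intCast_eq_single hk
  have apply_eq : (x ᵥ* G.map (↑) ᵥ* H.map (↑)) k = x k := by
    rw [vecMul_vecMul, ← map_mul_intCast]
    change x ⬝ᵥ ((G * H)ᵀ.map (Int.cast : ℤ → ℚ)).row k = x k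
    rw [row_eq, dotProduct_single_one]
  rw [← apply_eq]
  exact mem_integerPoints_iff_forall.1
    (vecMul_mem_integerPoints (mem_dualSubmodule_gramForm_iff.1 hx) H) k

/-- Here `H` inverts `G` off the rows and columns of `i` and `j`, so that the orthogonal complement
of the two basis vectors is unimodular. -/
theorem splitsRootPair_gramForm (hG : G.IsSymm) (hdiag : ∀ i, Even (G i i)) {i j : J} (hij : i ≠ j)
    (hi : G.row i = Pi.single i (-2)) (hj : G.row j = Pi.single j (-2)) {H : Matrix J J ℤ}
    (hH : ∀ k, k ≠ i → k ≠ j → (G * H).col k = Pi.single k 1) :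
    SplitsRootPair (gramForm G) (integerPoints J) ⟨_, single_mem_integerPoints i⟩
      ⟨_, single_mem_integerPoints j⟩ where
  isSymm := gramForm_isSymm hG
  isEven := isEvenLattice_gramForm hG hdiag
  left_self := by simp [gramForm_single_apply hi]
  right_self := by simp [gramForm_single_apply hj]
  left_right := by simp [gramForm_single_apply hi, hij]
  half_left_mem := half_single_mem_dualSubmodule_gramForm hi
  half_right_mem := half_single_mem_dualSubmodule_gramForm hj
  projection_mem x hx := by
    have apply_single {l : J} (hl : G.row l = Pi.single l (-2)) :
        gramForm G x (Pi.single l 1) / 2 = -x l := by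
      rw [(gramForm_isSymm hG).eq, gramForm_single_apply hl]
      push_cast
      ring
    refine mem_integerPoints_iff_forall.2 fun k => ?_
    rw [apply_single hi, apply_single hj]
    by_cases hki : k = i
    · exact ⟨0, by simp [hki, hij]⟩
    by_cases hkj : k = j
    · exact ⟨0, by simp [hkj, hij.symm]⟩
    obtain ⟨n, hn⟩ := exists_intCast_eq_apply_of_col_mul_eq_single (hH k hki hkj) hx
    exact ⟨n, by simp [hki, hkj, hn]⟩

end GramMatrix

section Lambda

open Matrix
open scoped Kronecker

/-- The Gram matrix of the hyperbolic plane `U`. -/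
def hyperbolicM : Matrix (Fin 2) (Fin 2) ℤ := !![0, 1; 1, 0]

/-- The inverse of the Gram matrix of `E₈`. -/
def E8Inv : Matrix (Fin 8) (Fin 8) ℤ :=
  -!![4, 5, 7, 10, 8, 6, 4, 2;
      5, 8, 10, 15, 12, 9, 6, 3;
      7, 10, 14, 20, 16, 12, 8, 4;
      10, 15, 20, 30, 24, 18, 12, 6;
      8, 12, 16, 24, 20, 15, 10, 5;
      6, 9, 12, 18, 15, 12, 8, 4;
      4, 6, 8, 12, 10, 8, 6, 3;
      2, 3, 4, 6, 5, 4, 3, 2]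

/-- The Gram matrix `gΛ` of `Λ`, as a `Matrix`. -/
abbrev gramΛ : Matrix JΛ JΛ ℤ := Matrix.of gΛ

/-- A matrix inverting `gramΛ` on the unimodular summand `U^{⊕2} ⊕ E₈^{⊕2}`; its block on
`[-2]^{⊕2}` is arbitrary. -/
def unimodularInvΛ : Matrix JΛ JΛ ℤ :=
  fromBlocks ((1 : Matrix (Fin 2) (Fin 2) ℤ) ⊗ₖ hyperbolicM) 0 0
    (fromBlocks ((1 : Matrix (Fin 2) (Fin 2) ℤ) ⊗ₖ E8Inv) 0 0 1)

theorem hyperbolicM_mul_hyperbolicM : hyperbolicM * hyperbolicM = 1 := by decide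

theorem E8M_mul_E8Inv : E8M * E8Inv = 1 := by decide

theorem gramΛ_eq_fromBlocks :
    gramΛ = fromBlocks ((1 : Matrix (Fin 2) (Fin 2) ℤ) ⊗ₖ hyperbolicM) 0 0
      (fromBlocks ((1 : Matrix (Fin 2) (Fin 2) ℤ) ⊗ₖ E8M) 0 0 (-2)) := by
  ext (⟨a, i⟩ | ⟨a, i⟩ | a) (⟨b, j⟩ | ⟨b, j⟩ | b)
  case inl.inl => revert a i b j; decide
  case inr.inl.inr.inl => revert a i b j; decide
  case inr.inr.inr.inr => revert a b; decide
  all_goals rfl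

theorem gramΛ_mul_unimodularInvΛ :
    gramΛ * unimodularInvΛ = fromBlocks 1 0 0 (fromBlocks 1 0 0 (-2)) := by
  simp only [gramΛ_eq_fromBlocks, unimodularInvΛ, fromBlocks_multiply, ← mul_kronecker_mul,
    hyperbolicM_mul_hyperbolicM, E8M_mul_E8Inv, one_kronecker_one, Matrix.mul_zero,
    Matrix.zero_mul, add_zero, zero_add, Matrix.mul_one]

theorem splitsRootPair_gramΛ :
    SplitsRootPair (gramForm gramΛ) (integerPoints JΛ)
      ⟨_, single_mem_integerPoints (.inr (.inr 0))⟩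
      ⟨_, single_mem_integerPoints (.inr (.inr 1))⟩ := by
  have inverts : ∀ k : JΛ, k ≠ .inr (.inr 0) → k ≠ .inr (.inr 1) →
      (gramΛ * unimodularInvΛ).col k = Pi.single k 1 := by
    rw [gramΛ_mul_unimodularInvΛ]
    decide
  exact splitsRootPair_gramForm (show gramΛᵀ = gramΛ by decide) (by decide) (by decide)
    (by decide) (by decide) inverts

theorem bfQ_eq_gramForm (x y : JΛ → ℚ) : bfQ x y = gramForm gramΛ x y := by
  rw [gramForm, Matrix.toBilin'_apply]
  rfl

theorem DualΛ_eq_dualSubmodule : DualΛ = (gramForm gramΛ).dualSubmodule (integerPoints JΛ) := by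
  ext x
  refine forall₂_congr fun l _ => ?_
  simp only [Submodule.mem_one, bfQ_eq_gramForm, eq_comm, eq_intCast]

end Lambda

/-- for `Λ = U^{⊕2} ⊕ E₈^{⊕2} ⊕ [-2]^{⊕2}`, the discriminant group
`D_Λ` is isomorphic to `(ℤ/2ℤ)²`, the orthogonal group of the finite quadratic form
on `D_Λ` has order 2, and `Õ(Λ) = O⁺(Λ) ∩ O^#(Λ)` has index 2 in `O⁺(Λ)`. -/
theorem stmt_4 :
    Nonempty (DiscΛ ≃+ (ZMod 2 × ZMod 2)) ∧
    (Nat.card {f : DiscΛ ≃+ DiscΛ //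
        ∀ x y : DualΛ, f (Submodule.Quotient.mk x) = Submodule.Quotient.mk y →
          ∃ k : ℤ, bfQ (y : JΛ → ℚ) (y : JΛ → ℚ) -
            bfQ (x : JΛ → ℚ) (x : JΛ → ℚ) = 2 * (k : ℚ)} = 2) ∧
    ((∃ f, IsIsomΛ f ∧ SpinPosΛ f ∧ ¬StableΛ f) ∧
      ∀ f g, IsIsomΛ f → SpinPosΛ f → IsIsomΛ g → SpinPosΛ g →
        ¬StableΛ f → ¬StableΛ g → StableΛ (f.trans g)) := by
  have h := stmt_4_general splitsRootPair_gramΛ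
  simp only [IsDiscriminantIsometry, IsLatticeIsometry, HasPositiveSpinorNorm, IsStable,
    ← bfQ_eq_gramForm] at h
  unfold DiscriminantGroup at h
  rw [← DualΛ_eq_dualSubmodule] at h
  obtain ⟨h_equiv, h_card, h_ex, h_trans⟩ := h
  exact ⟨h_equiv, h_card, h_ex, fun f g hf _ hg _ => h_trans f g hf hg⟩
end

section
/- Let Λ = U^{⊕2} ⊕ E₈^{⊕2} ⊕ [−2]^{⊕2} and let L_{K3[3]} = U^{⊕3} ⊕ E₈^{⊕2} ⊕ [−4]. If H ∈ L_{K3[3]} is a primitive vector with H² = 4 and divisibility div(H, L_{K3[3]}) = 2, then the orthogonal complement H^⊥ in L_{K3[3]} is isometric to Λ. -/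
/-- Index type for `L_{K3[3]} = U^{⊕3} ⊕ E₈^{⊕2} ⊕ [-4]`, of rank 23. -/
abbrev I33 : Type := (Fin 3 × Fin 2) ⊕ ((Fin 2 × Fin 8) ⊕ Fin 1)

/-- Gram matrix of `L_{K3[3]} = U^{⊕3} ⊕ E₈^{⊕2} ⊕ [-4]`. -/
def g33 : I33 → I33 → ℤ
  | Sum.inl (a, i), Sum.inl (b, j) => if a = b ∧ i ≠ j then 1 else 0
  | Sum.inr (Sum.inl (a, i)), Sum.inr (Sum.inl (b, j)) => if a = b then E8M i j else 0
  | Sum.inr (Sum.inr _), Sum.inr (Sum.inr _) => -4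
  | _, _ => 0

/-- The bilinear form of `L_{K3[3]}`. -/
def bf33 (x y : I33 → ℤ) : ℤ := ∑ i : I33, ∑ j : I33, x i * g33 i j * y j

/-- The bilinear form of `Λ`. -/
def bfΛ (x y : JΛ → ℤ) : ℤ := ∑ i : JΛ, ∑ j : JΛ, x i * gΛ i j * y j

/-!
Eichler transvections act trivially on the discriminant group `L^∨ / L`. In an even lattice
containing `U ⊕ U`, the Euclidean algorithm can be run with them on the pairings of a vector with
the hyperbolic basis, until the vector pairs with an isotropic vector to its divisibility; then a
single transvection joins any two such vectors of equal square and discriminant class.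

If `H` has divisibility `2`, then `H ≡ w` modulo `2`, since `U^{⊕3} ⊕ E₈^{⊕2}` is unimodular and `H`
is primitive. So an isometry takes `H` to `2 e + 2 f + w`, whose orthogonal complement is
`U^{⊕2} ⊕ E₈^{⊕2} ⊕ ⟨e - f⟩ ⊕ ⟨e + f + w⟩`.
-/

open LinearMap (BilinForm)

section EichlerTransvection

variable {R L : Type*} [CommRing R] [AddCommGroup L] [Module R L]

/-- The stable orthogonal group `Õ(L)`: the isometries of `L` acting trivially on the discriminant
group `L^∨ / L`. A class of `L^∨ / L` is represented by `x / d` with `B x y ∈ d R` for all `y`, so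
the action is trivial when `g x - x` is a multiple of `d` for all such `x` and `d`. -/
def stableOrthogonalGroup (B : BilinForm R L) : Subgroup (L ≃ₗ[R] L) where
  carrier := {g | (∀ x y, B (g x) (g y) = B x y) ∧
    ∀ d x, (∀ y, d ∣ B x y) → ∃ u, g x = x + d • u}
  one_mem' := ⟨fun _ _ => rfl, fun _ _ _ => ⟨0, by simp⟩⟩
  mul_mem' := by
    rintro g h ⟨hg, hg'⟩ ⟨hh, hh'⟩
    refine ⟨fun x y => by simp [hg, hh], fun d x hx => ?_⟩
    obtain ⟨u, hu⟩ := hh' d x hx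
    obtain ⟨v, hv⟩ := hg' d x hx
    exact ⟨v + g u, by simp [hu, hv, add_assoc]⟩
  inv_mem' := by
    rintro g ⟨hg, hg'⟩
    refine ⟨fun x y => by rw [← hg]; simp, fun d x hx => ?_⟩
    obtain ⟨u, hu⟩ := hg' d x hx
    refine ⟨-g⁻¹ u, g.injective ?_⟩
    simp [hu]

/-- The Eichler transvection `v ↦ v - (a, v) e + (e, v) a - q (e, v) e`. It is an isometry when `e`
is isotropic, `a` is orthogonal to `e` and `a² = 2 q`; taking `q` as a parameter avoids halving. -/
def eichlerMap (B : BilinForm R L) (e a : L) (q : R) : L →ₗ[R] L :=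
  LinearMap.id - (B a).smulRight e + (B e).smulRight a - (q • B e).smulRight e

variable {B : BilinForm R L} {e a : L} {q : R}

theorem eichlerMap_apply (v : L) :
    eichlerMap B e a q v = v - B a v • e + B e v • a - (q * B e v) • e := rfl

theorem eichlerMap_neg_eichlerMap (hB : B.IsSymm) (he : B e e = 0) (hea : B e a = 0)
    (ha : B a a = 2 * q) (v : L) : eichlerMap B e (-a) q (eichlerMap B e a q v) = v := by
  have hae : B a e = 0 := by rw [hB.eq, hea]
  simp only [eichlerMap_apply, map_sub, map_add, map_smul, map_neg, LinearMap.neg_apply, he, hea,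
    hae, ha]
  module

theorem apply_eichlerMap_eichlerMap (hB : B.IsSymm) (he : B e e = 0) (hea : B e a = 0)
    (ha : B a a = 2 * q) (v w : L) :
    B (eichlerMap B e a q v) (eichlerMap B e a q w) = B v w := by
  have hae : B a e = 0 := by rw [hB.eq, hea]
  simp only [eichlerMap_apply, map_sub, map_add, map_smul, LinearMap.sub_apply,
    LinearMap.add_apply, LinearMap.smul_apply, smul_eq_mul, he, hea, hae, ha, hB.eq v e, hB.eq v a]
  ring

theorem exists_mem_stableOrthogonalGroup_eq_eichlerMap (hB : B.IsSymm) (he : B e e = 0)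
    (hea : B e a = 0) (ha : B a a = 2 * q) :
    ∃ g ∈ stableOrthogonalGroup B, ∀ v, g v = eichlerMap B e a q v := by
  have left_inv := eichlerMap_neg_eichlerMap hB he hea ha
  have right_inv := eichlerMap_neg_eichlerMap (a := -a) (q := q) hB he (by simp [hea])
    (by simp [ha])
  rw [neg_neg] at right_inv
  refine ⟨.ofLinearMap (eichlerMap B e a q) (eichlerMap B e (-a) q) (LinearMap.ext right_inv)
    (LinearMap.ext left_inv), ⟨apply_eichlerMap_eichlerMap hB he hea ha, fun d x hx => ?_⟩,
    fun _ => rfl⟩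
  obtain ⟨r, hr⟩ := hx a
  obtain ⟨s, hs⟩ := hx e
  refine ⟨-r • e + s • a - (q * s) • e, ?_⟩
  rw [LinearEquiv.coe_ofLinearMap, eichlerMap_apply, hB.eq a, hB.eq e, hr, hs]
  module

theorem exists_mem_stableOrthogonalGroup_apply_eq_add_smul [IsDomain R] [NeZero (2 : R)]
    (hB : B.IsSymm) (heven : ∀ v, Even (B v v)) (he : B e e = 0) {d : R} (hd : d ≠ 0) {x u : L}
    (hex : B e x = d) (hey : B e (x + d • u) = d) (hsq : B (x + d • u) (x + d • u) = B x x) :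
    ∃ g ∈ stableOrthogonalGroup B, g x = x + d • u := by
  have heu : B e u = 0 := by simpa [hex, hd] using hey
  obtain ⟨q, hq⟩ := (heven u).exists_two_nsmul
  rw [nsmul_eq_mul, Nat.cast_ofNat] at hq
  have hux : B u x = -(q * d) := by
    refine mul_left_cancel₀ (mul_ne_zero two_ne_zero hd) ?_
    simp only [map_add, map_smul, LinearMap.add_apply, LinearMap.smul_apply, smul_eq_mul, hq,
      hB.eq x u] at hsq
    linear_combination hsq
  obtain ⟨g, hg, hgv⟩ := exists_mem_stableOrthogonalGroup_eq_eichlerMap hB he heu hq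
  refine ⟨g, hg, ?_⟩
  rw [hgv, eichlerMap_apply, hux, hex]
  module

end EichlerTransvection

section EichlerCriterion

variable {R L : Type*} [AddCommGroup L]

/-- Two orthogonal hyperbolic pairs `e₁, f₁` and `e₂, f₂`, spanning a sublattice `U ⊕ U`. -/
structure HyperbolicFrame [CommRing R] [Module R L] (B : BilinForm R L) (e₁ f₁ e₂ f₂ : L) :
    Prop where
  e₁e₁ : B e₁ e₁ = 0
  f₁f₁ : B f₁ f₁ = 0
  e₁f₁ : B e₁ f₁ = 1
  e₂e₂ : B e₂ e₂ = 0
  f₂f₂ : B f₂ f₂ = 0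
  e₂f₂ : B e₂ f₂ = 1
  e₁e₂ : B e₁ e₂ = 0
  e₁f₂ : B e₁ f₂ = 0
  f₁e₂ : B f₁ e₂ = 0
  f₁f₂ : B f₁ f₂ = 0

/-- The vector `x` has divisibility `d`: the ideal `B x L` is generated by `d`. -/
structure HasDivisibility [CommRing R] [Module R L] (B : BilinForm R L) (x : L) (d : R) :
    Prop where
  dvd : ∀ y, d ∣ B x y
  exists_eq : ∃ y, B x y = d

namespace HyperbolicFrame

section CommRing

variable [CommRing R] [Module R L] {B : BilinForm R L} {e₁ f₁ e₂ f₂ : L}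

theorem swap_snd (hB : B.IsSymm) (h : HyperbolicFrame B e₁ f₁ e₂ f₂) :
    HyperbolicFrame B e₁ f₁ f₂ e₂ :=
  ⟨h.e₁e₁, h.f₁f₁, h.e₁f₁, h.f₂f₂, h.e₂e₂, by rw [hB.eq, h.e₂f₂], h.e₁f₂, h.e₁e₂, h.f₁f₂, h.f₁e₂⟩

theorem exists_apply_eq_add_mul (hB : B.IsSymm) (h : HyperbolicFrame B e₁ f₁ e₂ f₂) (x : L)
    (k : R) : ∃ g ∈ stableOrthogonalGroup B, B e₁ (g x) = B e₂ x + k * B e₁ x := by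
  -- First `(e₂, x)` becomes `(e₂, x) + (k - 1) (e₁, x)`, which is then added to `(e₁, x)`.
  obtain ⟨g, hg, hgv⟩ := exists_mem_stableOrthogonalGroup_eq_eichlerMap (e := e₁)
    (a := (k - 1) • f₂) (q := 0) hB h.e₁e₁ (by simp [h.e₁f₂]) (by simp [h.f₂f₂])
  obtain ⟨t, ht, htv⟩ := exists_mem_stableOrthogonalGroup_eq_eichlerMap (e := e₂) (a := f₁) (q := 0)
    hB h.e₂e₂ (by rw [hB.eq, h.f₁e₂]) (by simp [h.f₁f₁])
  refine ⟨t * g, mul_mem ht hg, ?_⟩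
  have hg₁ : B e₁ (g x) = B e₁ x := by simp [hgv, eichlerMap_apply, h.e₁e₁, h.e₁f₂]
  have hg₂ : B e₂ (g x) = B e₂ x + (k - 1) * B e₁ x := by
    simp [hgv, eichlerMap_apply, hB.eq e₂ e₁, h.e₁e₂, h.e₂f₂, mul_comm]
  have ht₁ : B e₁ (t (g x)) = B e₁ (g x) + B e₂ (g x) := by
    simp [htv, eichlerMap_apply, h.e₁e₂, h.e₁f₁]
  rw [LinearEquiv.mul_apply, ht₁, hg₁, hg₂]
  ring

theorem exists_apply_eq_zero_of_dvd (hB : B.IsSymm) (h : HyperbolicFrame B e₁ f₁ e₂ f₂) {x : L}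
    (hdvde : B e₁ x ∣ B e₂ x) (hdvdf : B e₁ x ∣ B f₂ x) :
    ∃ g ∈ stableOrthogonalGroup B, B e₂ (g x) = 0 ∧ B f₂ (g x) = 0 := by
  obtain ⟨r, hr⟩ := hdvde
  obtain ⟨s, hs⟩ := hdvdf
  have hf₂e₂ : B f₂ e₂ = 1 := by rw [hB.eq, h.e₂f₂]
  obtain ⟨g, hg, hgv⟩ := exists_mem_stableOrthogonalGroup_eq_eichlerMap (e := e₁)
    (a := -(s • e₂ + r • f₂)) (q := r * s) hB h.e₁e₁ (by simp [h.e₁e₂, h.e₁f₂])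
    (by simp [h.e₂e₂, h.f₂f₂, h.e₂f₂, hf₂e₂]; ring)
  refine ⟨g, hg, ?_, ?_⟩
  · simp [hgv, eichlerMap_apply, hB.eq e₂ e₁, h.e₁e₂, h.e₂e₂, h.e₂f₂, hr, mul_comm]
  · simp [hgv, eichlerMap_apply, hB.eq f₂ e₁, h.e₁f₂, h.f₂f₂, hf₂e₂, hs, mul_comm]

theorem exists_apply_eq_of_apply_eq_zero (hB : B.IsSymm) (heven : ∀ v, Even (B v v))
    (h : HyperbolicFrame B e₁ f₁ e₂ f₂) {x : L} (he₂ : B e₂ x = 0) (hf₂ : B f₂ x = 0) (a : L) :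
    ∃ g ∈ stableOrthogonalGroup B, B f₂ (g x) = B a x := by
  have hf₂e₂ : B f₂ e₂ = 1 := by rw [hB.eq, h.e₂f₂]
  set b := B f₂ a • e₂ + B e₂ a • f₂ - a with hb
  have he₂b : B e₂ b = 0 := by simp [hb, h.e₂e₂, h.e₂f₂]
  have hbx : B b x = -B a x := by simp [hb, he₂, hf₂]
  obtain ⟨q, hq⟩ := (heven b).exists_two_nsmul
  rw [nsmul_eq_mul, Nat.cast_ofNat] at hq
  obtain ⟨g, hg, hgv⟩ := exists_mem_stableOrthogonalGroup_eq_eichlerMap hB h.e₂e₂ he₂b hq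
  exact ⟨g, hg, by simp [hgv, eichlerMap_apply, he₂, hf₂, hbx, hf₂e₂]⟩

end CommRing

variable [EuclideanDomain R] [Module R L] {B : BilinForm R L} {e₁ f₁ e₂ f₂ : L}

theorem exists_apply_dvd (hB : B.IsSymm) (h : HyperbolicFrame B e₁ f₁ e₂ f₂) (x : L) :
    ∃ g ∈ stableOrthogonalGroup B, B e₁ (g x) ∣ B e₂ (g x) ∧ B e₁ (g x) ∣ B f₂ (g x) := by
  by_cases hne : ∃ g ∈ stableOrthogonalGroup B, B e₁ (g x) ≠ 0
  · -- Take `(e₁, g x)` nonzero of least Euclidean norm; the remainder of `(e₂, g x)` modulo it is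
    -- again a value of `(e₁, ·)` on the orbit.
    obtain ⟨g, ⟨hg, hg₀⟩, hmin⟩ :=
      (InvImage.wf (fun g : L ≃ₗ[R] L => B e₁ (g x)) EuclideanDomain.r_wellFounded).has_min
        {g | g ∈ stableOrthogonalGroup B ∧ B e₁ (g x) ≠ 0} hne
    have hdvd {e f : L} (hF : HyperbolicFrame B e₁ f₁ e f) : B e₁ (g x) ∣ B e (g x) := by
      by_contra hndvd
      obtain ⟨t, ht, htg⟩ := hF.exists_apply_eq_add_mul hB (g x) (-(B e (g x) / B e₁ (g x)))
      have hmod : B e₁ ((t * g) x) = B e (g x) % B e₁ (g x) := by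
        rw [LinearEquiv.mul_apply, htg, EuclideanDomain.mod_eq_sub_mul_div]
        ring
      refine hmin (t * g) ⟨mul_mem ht hg, ?_⟩ ?_
      · rwa [hmod, Ne, EuclideanDomain.mod_eq_zero]
      · simpa only [InvImage, hmod] using EuclideanDomain.mod_lt _ hg₀
    exact ⟨g, hg, hdvd h, hdvd (h.swap_snd hB)⟩
  · push Not at hne
    have hzero {e f : L} (hF : HyperbolicFrame B e₁ f₁ e f) : B e x = 0 := by
      obtain ⟨g, hg, hgx⟩ := hF.exists_apply_eq_add_mul hB x 0
      simpa [hne g hg] using hgx.symm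
    exact ⟨1, one_mem _, by simp [hzero h], by simp [hzero (h.swap_snd hB)]⟩

theorem exists_apply_eq (hB : B.IsSymm) (heven : ∀ v, Even (B v v))
    (h : HyperbolicFrame B e₁ f₁ e₂ f₂) (a x : L) :
    ∃ g ∈ stableOrthogonalGroup B, B f₂ (g x) = B a x := by
  obtain ⟨g, hg, hdvde, hdvdf⟩ := h.exists_apply_dvd hB x
  obtain ⟨k, hk, hke, hkf⟩ := h.exists_apply_eq_zero_of_dvd hB hdvde hdvdf
  obtain ⟨t, ht, htx⟩ := h.exists_apply_eq_of_apply_eq_zero hB heven hke hkf (k (g a))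
  refine ⟨t * k * g, mul_mem (mul_mem ht hk) hg, ?_⟩
  simp only [LinearEquiv.mul_apply, htx, hk.1, hg.1]

end HyperbolicFrame

/-- Eichler's criterion. The congruence of `x` and `y` modulo `d` says that `x / d` and `y / d` have
the same class in the discriminant group. -/
theorem eichler_criterion [EuclideanDomain R] [NeZero (2 : R)] [Module R L] {B : BilinForm R L}
    {e₁ f₁ e₂ f₂ : L} (hB : B.IsSymm) (heven : ∀ v, Even (B v v))
    (hF : HyperbolicFrame B e₁ f₁ e₂ f₂) {x y : L} {d : R} (hd : d ≠ 0)
    (hx : HasDivisibility B x d) (hy : HasDivisibility B y d) (hxy : ∃ u, y = x + d • u)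
    (hsq : B x x = B y y) : ∃ g ∈ stableOrthogonalGroup B, g x = y := by
  have exists_pairing {z : L} (hz : HasDivisibility B z d) :
      ∃ g ∈ stableOrthogonalGroup B, B f₂ (g z) = d ∧ ∃ v, g z = z + d • v := by
    obtain ⟨a, ha⟩ := hz.exists_eq
    obtain ⟨g, hg, hgz⟩ := hF.exists_apply_eq hB heven a z
    exact ⟨g, hg, by rw [hgz, hB.eq, ha], hg.2 d z hz.dvd⟩
  obtain ⟨u, hu⟩ := hxy
  obtain ⟨g, hg, hgx, v, hgv⟩ := exists_pairing hx
  obtain ⟨k, hk, hky, w, hkw⟩ := exists_pairing hy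
  have hkg : k y = g x + d • (u + w - v) := by
    rw [hkw, hgv, hu]
    module
  obtain ⟨t, ht, htx⟩ := exists_mem_stableOrthogonalGroup_apply_eq_add_smul hB heven hF.f₂f₂ hd
    hgx (hkg ▸ hky) (by rw [← hkg, hk.1, hg.1, hsq])
  refine ⟨k⁻¹ * t * g, mul_mem (mul_mem (inv_mem hk) ht) hg, ?_⟩
  rw [LinearEquiv.mul_apply, LinearEquiv.mul_apply, htx, ← hkg]
  exact k.symm_apply_apply y

end EichlerCriterion

section GramMatrix

variable {R : Type*} [CommRing R]

theorem even_apply_self_of_span_eq_top {L : Type*} [AddCommGroup L] [Module R L]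
    {B : BilinForm R L} (hB : B.IsSymm) {s : Set L} (hs : Submodule.span R s = ⊤)
    (heven : ∀ v ∈ s, Even (B v v)) (x : L) : Even (B x x) := by
  have hx : x ∈ Submodule.span R s := hs ▸ Submodule.mem_top
  induction hx using Submodule.span_induction with
  | mem v hv => exact heven v hv
  | zero => simp
  | add v w _ _ hv hw =>
    have hadd : B (v + w) (v + w) = B v v + B w w + (B v w + B v w) := by
      simp only [map_add, LinearMap.add_apply, hB.eq w v]
      ring
    exact hadd ▸ (hv.add hw).add ⟨B v w, rfl⟩
  | smul c v _ hv => simpa using (hv.mul_left c).mul_left c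

theorem dvd_of_forall_dvd_toBilin' {n : Type*} [Fintype n] [DecidableEq n] {A : Matrix n n R}
    (hA : IsUnit A.det) {d : R} {z : n → R} (hz : ∀ y, d ∣ Matrix.toBilin' A z y) (i : n) :
    d ∣ z i := by
  have hdvd := hz (A⁻¹.mulVec (Pi.single i 1))
  rwa [Matrix.toBilin'_apply', Matrix.mulVec_mulVec, Matrix.mul_nonsing_inv A hA,
    Matrix.one_mulVec, dotProduct_single_one] at hdvd

end GramMatrix

theorem E8M_eq_neg_E₈ : E8M = -CartanMatrix.E₈ := by
  decide

theorem isUnit_det_E8M : IsUnit E8M.det := by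
  simp [E8M_eq_neg_E₈, Matrix.det_neg, CartanMatrix.E₈_det]

theorem bf33_eq (x y : I33 → ℤ) :
    bf33 x y = ∑ a, (x (.inl (a, 0)) * y (.inl (a, 1)) + x (.inl (a, 1)) * y (.inl (a, 0))) +
      ∑ a, Matrix.toBilin' E8M (fun i => x (.inr (.inl (a, i)))) (fun i => y (.inr (.inl (a, i)))) -
      4 * (x (.inr (.inr 0)) * y (.inr (.inr 0))) := by
  simp only [bf33, g33, Int.reduceNeg, Fintype.sum_sum_type, Fintype.sum_prod_type,
    Matrix.toBilin'_apply, Fin.sum_univ_two, Fin.sum_univ_three, Finset.univ_unique,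
    Fin.default_eq_zero, Finset.sum_singleton, Fin.isValue, Fin.reduceEq, ne_eq, not_true_eq_false,
    not_false_eq_true, and_false, and_true, zero_ne_one, one_ne_zero, ↓reduceIte, mul_ite, ite_mul,
    mul_one, mul_zero, zero_mul, Finset.sum_const_zero, Finset.sum_ite_irrel, add_zero, zero_add]
  ring

theorem bfΛ_eq (x y : JΛ → ℤ) :
    bfΛ x y = ∑ a, (x (.inl (a, 0)) * y (.inl (a, 1)) + x (.inl (a, 1)) * y (.inl (a, 0))) +
      ∑ a, Matrix.toBilin' E8M (fun i => x (.inr (.inl (a, i)))) (fun i => y (.inr (.inl (a, i)))) -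
      2 * ∑ a, x (.inr (.inr a)) * y (.inr (.inr a)) := by
  simp only [bfΛ, gΛ, Int.reduceNeg, Fintype.sum_sum_type, Fintype.sum_prod_type,
    Matrix.toBilin'_apply, Fin.sum_univ_two, Fin.isValue, ne_eq, not_true_eq_false,
    not_false_eq_true, and_false, and_true, zero_ne_one, one_ne_zero, ↓reduceIte, mul_ite, ite_mul,
    mul_one, mul_zero, zero_mul, Finset.sum_const_zero, Finset.sum_ite_irrel, add_zero, zero_add]
  ring

/-- `bf33` as a bundled bilinear form. -/
def B33 : BilinForm ℤ (I33 → ℤ) := Matrix.toBilin' (Matrix.of g33)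

theorem B33_apply (x y : I33 → ℤ) : B33 x y = bf33 x y :=
  Matrix.toBilin'_apply _ x y

theorem isSymm_B33 : B33.IsSymm := by
  rw [B33, Matrix.isSymm_toBilin'_iff_isSymm]
  decide

theorem even_B33_self (x : I33 → ℤ) : Even (B33 x x) := by
  refine even_apply_self_of_span_eq_top isSymm_B33 (Pi.basisFun ℤ I33).span_eq ?_ x
  rintro _ ⟨i, rfl⟩
  rw [Pi.basisFun_apply, B33, Matrix.toBilin'_single]
  revert i
  decide

/-- The standard basis of `U^{⊕3}`: the vectors with indices `(a, 0)` and `(a, 1)` form the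
hyperbolic pair of the `a`-th summand. -/
def hyperbolicVec (p : Fin 3 × Fin 2) : I33 → ℤ := Pi.single (.inl p) 1

/-- The generator of the summand `[-4]`. -/
def negFourVec : I33 → ℤ := Pi.single (.inr (.inr 0)) 1

theorem bf33_hyperbolicVec (a : Fin 3) (i : Fin 2) (v : I33 → ℤ) :
    bf33 (hyperbolicVec (a, i)) v = v (.inl (a, 1 - i)) := by
  fin_cases i <;> simp [bf33_eq, hyperbolicVec, Pi.single_apply, ← Pi.zero_def]

theorem bf33_negFourVec (v : I33 → ℤ) : bf33 negFourVec v = -4 * v (.inr (.inr 0)) := by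
  simp [bf33_eq, negFourVec, ← Pi.zero_def]

theorem hyperbolicFrame_hyperbolicVec :
    HyperbolicFrame B33 (hyperbolicVec (0, 0)) (hyperbolicVec (0, 1)) (hyperbolicVec (1, 0))
      (hyperbolicVec (1, 1)) := by
  constructor <;> rw [B33_apply, bf33_hyperbolicVec] <;> simp [hyperbolicVec]

theorem dvd_inl_of_forall_dvd_bf33 {x : I33 → ℤ} {d : ℤ} (hx : ∀ y, d ∣ bf33 x y)
    (p : Fin 3 × Fin 2) : d ∣ x (.inl p) := by
  obtain ⟨a, i⟩ := p
  have hdvd := hx (hyperbolicVec (a, 1 - i))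
  rwa [← B33_apply, isSymm_B33.eq, B33_apply, bf33_hyperbolicVec, sub_sub_cancel] at hdvd

theorem dvd_inr_inl_of_forall_dvd_bf33 {x : I33 → ℤ} {d : ℤ} (hx : ∀ y, d ∣ bf33 x y)
    (p : Fin 2 × Fin 8) : d ∣ x (.inr (.inl p)) := by
  obtain ⟨a, i⟩ := p
  refine dvd_of_forall_dvd_toBilin' (z := fun i => x (.inr (.inl (a, i)))) isUnit_det_E8M
    (fun y => ?_) i
  have hdvd := hx (Sum.elim 0 (Sum.elim (fun p => if p.1 = a then y p.2 else 0) 0))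
  fin_cases a <;> simpa [bf33_eq, ← Pi.zero_def] using hdvd

theorem exists_eq_negFourVec_add_two_smul {x : I33 → ℤ}
    (hprim : ∀ (c : ℤ) (w : I33 → ℤ), x = c • w → IsUnit c) (hx : ∀ y, 2 ∣ bf33 x y) :
    ∃ u, x = negFourVec + (2 : ℤ) • u := by
  have hU := dvd_inl_of_forall_dvd_bf33 hx
  have hE := dvd_inr_inl_of_forall_dvd_bf33 hx
  have hodd : ¬ 2 ∣ x (.inr (.inr 0)) := by
    intro heven
    have hdvd : ∀ i, 2 ∣ x i := by
      rintro (p | p | p)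
      · exact hU p
      · exact hE p
      · rwa [Subsingleton.elim p 0]
    choose u hu using hdvd
    exact absurd (hprim 2 u (funext hu)) (by decide)
  have hdvd : ∀ i, 2 ∣ x i - negFourVec i := by
    rintro (p | p | p)
    · simpa [negFourVec] using hU p
    · simpa [negFourVec] using hE p
    · rw [Subsingleton.elim p 0, negFourVec, Pi.single_eq_same]
      lia
  choose u hu using hdvd
  exact ⟨u, funext fun i => by simp [← hu i]⟩

/-- The vector `2 e + 2 f + w` of square `4` and divisibility `2`, where `e, f` is a hyperbolic pair
and `w` generates `[-4]`. -/
def stdVec : I33 → ℤ :=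
  (2 : ℤ) • (hyperbolicVec (0, 0) + hyperbolicVec (0, 1)) + negFourVec

theorem bf33_stdVec (v : I33 → ℤ) :
    bf33 stdVec v = 2 * (v (.inl (0, 0)) + v (.inl (0, 1)) - 2 * v (.inr (.inr 0))) := by
  simp only [← B33_apply, stdVec, map_add, map_smul, LinearMap.add_apply, LinearMap.smul_apply]
  simp only [B33_apply, bf33_hyperbolicVec, bf33_negFourVec, sub_zero, sub_self, smul_eq_mul]
  ring

theorem hasDivisibility_stdVec : HasDivisibility B33 stdVec 2 where
  dvd y := by simp [B33_apply, bf33_stdVec]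
  exists_eq := ⟨hyperbolicVec (0, 0), by simp [B33_apply, bf33_stdVec, hyperbolicVec]⟩

theorem exists_apply_eq_stdVec {x : I33 → ℤ}
    (hprim : ∀ (c : ℤ) (w : I33 → ℤ), x = c • w → IsUnit c) (hsq : bf33 x x = 4)
    (hdiv : HasDivisibility B33 x 2) : ∃ g ∈ stableOrthogonalGroup B33, g x = stdVec := by
  obtain ⟨u, hu⟩ := exists_eq_negFourVec_add_two_smul hprim fun y => B33_apply x y ▸ hdiv.dvd y
  have hcongr : stdVec = x + (2 : ℤ) • (hyperbolicVec (0, 0) + hyperbolicVec (0, 1) - u) := by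
    rw [stdVec, hu]
    module
  have hstd : bf33 stdVec stdVec = 4 := by
    rw [bf33_stdVec]
    simp [stdVec, hyperbolicVec, negFourVec]
  exact eichler_criterion isSymm_B33 even_B33_self hyperbolicFrame_hyperbolicVec two_ne_zero hdiv
    hasDivisibility_stdVec ⟨_, hcongr⟩ (by rw [B33_apply, B33_apply, hsq, hstd])

/-- The embedding of `Λ` with image the orthogonal complement of `2 e + 2 f + w`: the generators of
the two summands `[-2]` go to `e - f` and `e + f + w`. -/
def stdEmb : (JΛ → ℤ) →ₗ[ℤ] (I33 → ℤ) :=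
  LinearMap.pi fun
    | .inl (0, 0) => .proj (.inr (.inr 0)) + .proj (.inr (.inr 1))
    | .inl (0, 1) => -.proj (.inr (.inr 0)) + .proj (.inr (.inr 1))
    | .inl (1, i) => .proj (.inl (0, i))
    | .inl (2, i) => .proj (.inl (1, i))
    | .inr (.inl p) => .proj (.inr (.inl p))
    | .inr (.inr _) => .proj (.inr (.inr 1))

/-- A left inverse of `stdEmb`, reading off the coordinates of a vector orthogonal to
`2 e + 2 f + w`. -/
def stdRetraction (v : I33 → ℤ) : JΛ → ℤ
  | .inl (0, i) => v (.inl (1, i))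
  | .inl (1, i) => v (.inl (2, i))
  | .inr (.inl p) => v (.inr (.inl p))
  | .inr (.inr 0) => v (.inl (0, 0)) - v (.inr (.inr 0))
  | .inr (.inr 1) => v (.inr (.inr 0))

theorem bf33_stdEmb (x y : JΛ → ℤ) : bf33 (stdEmb x) (stdEmb y) = bfΛ x y := by
  simp only [bf33_eq, bfΛ_eq, stdEmb, Fin.sum_univ_two, Fin.sum_univ_three, LinearMap.pi_apply,
    LinearMap.add_apply, LinearMap.neg_apply, LinearMap.coe_proj, Function.eval]
  ring

theorem stdRetraction_leftInverse : Function.LeftInverse stdRetraction stdEmb := by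
  intro x
  ext (⟨a, i⟩ | p | a)
  · fin_cases a <;> rfl
  · rfl
  · fin_cases a <;> simp [stdRetraction, stdEmb]

theorem stdEmb_stdRetraction {v : I33 → ℤ} (hv : bf33 stdVec v = 0) :
    stdEmb (stdRetraction v) = v := by
  rw [bf33_stdVec] at hv
  have hv₁ : v (.inr (.inr 0)) - v (.inl (0, 0)) + v (.inr (.inr 0)) = v (.inl (0, 1)) := by lia
  ext (⟨a, i⟩ | p | a)
  · fin_cases a <;> fin_cases i <;> simp [stdRetraction, stdEmb, hv₁]
  · rfl
  · rw [Subsingleton.elim a 0]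
    rfl

theorem bf33_stdVec_stdEmb (x : JΛ → ℤ) : bf33 stdVec (stdEmb x) = 0 := by
  simp only [bf33_stdVec, stdEmb, LinearMap.pi_apply, LinearMap.add_apply, LinearMap.neg_apply,
    LinearMap.coe_proj, Function.eval]
  ring

theorem exists_stdEmb_eq_iff (v : I33 → ℤ) : (∃ x, stdEmb x = v) ↔ bf33 stdVec v = 0 :=
  ⟨fun ⟨x, hx⟩ => hx ▸ bf33_stdVec_stdEmb x, fun hv => ⟨_, stdEmb_stdRetraction hv⟩⟩

/-- if `H ∈ L_{K3[3]}` is primitive with `H² = 4` and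
`div(H, L_{K3[3]}) = 2`, then `H^⊥ ⊆ L_{K3[3]}` is isometric to
`Λ = U^{⊕2} ⊕ E₈^{⊕2} ⊕ [-2]^{⊕2}`. -/
theorem stmt_16 (H : I33 → ℤ)
    (hprim : ∀ (c : ℤ) (w : I33 → ℤ), H = c • w → IsUnit c)
    (hH2 : bf33 H H = 4)
    (hdiv : (∀ y : I33 → ℤ, ∃ k : ℤ, bf33 H y = 2 * k) ∧
      ∃ y : I33 → ℤ, bf33 H y = 2) :
    ∃ φ : (JΛ → ℤ) →ₗ[ℤ] (I33 → ℤ), Function.Injective φ ∧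
      (∀ x y, bf33 (φ x) (φ y) = bfΛ x y) ∧
      ∀ w : I33 → ℤ, (∃ x, φ x = w) ↔ bf33 H w = 0 := by
  obtain ⟨g, ⟨hg, -⟩, hgH⟩ := exists_apply_eq_stdVec hprim hH2
    ⟨fun y => B33_apply H y ▸ hdiv.1 y, by simpa only [B33_apply] using hdiv.2⟩
  simp only [B33_apply] at hg
  refine ⟨g.symm ∘ₗ stdEmb, g.symm.injective.comp stdRetraction_leftInverse.injective,
    fun x y => ?_, fun w => ?_⟩
  · rw [← bf33_stdEmb, ← hg]
    simp
  · rw [← hg, hgH, ← exists_stdEmb_eq_iff]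
    simp [LinearEquiv.symm_apply_eq]
end
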